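/- Let $K$ be a field, let $j,k$ be positive integers, and let $a,b \in K$ with $a^k \neq b^j$. Set $S_1 = \sum_{i=0}^{k-1} X^{ij}\,C(a^{k-1-i})$ and $S_2 = \sum_{i=0}^{j-1} X^{ik}\,C(b^{j-1-i})$ in $K[X]$. Then in the field of rational functions $K(X)$ one has $$\frac{1}{(X^j-a)(X^k-b)} = \frac{1}{b^j-a^k}\cdot\frac{S_1 \bmod (X^k-b)}{X^k-b} \; - \; \frac{1}{b^j-a^k}\cdot\frac{S_2 \bmod (X^j-a)}{X^j-a},$$ where $p \bmod q$ denotes the remainder of polynomial division of $p$ by the monic polynomial $q$. In particular this is a partial fraction expansion: the two numerators have degree strictly less than $k$ and $j$ respectively. -/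

import Mathlib

open Polynomial Finset

/-!
The geometric sums satisfy `S₁ (X^j - a) = X^{jk} - a^k` and `S₂ (X^k - b) = X^{jk} - b^j`, so
`S₁ (X^j - a) - S₂ (X^k - b) = b^j - a^k` is a Bézout relation between the two denominators.
Reducing it modulo their product replaces `S₁` and `S₂` by their remainders and leaves the constant
unchanged; dividing by the product of the denominators gives the expansion.
-/

section Polynomial

theorem sum_X_pow_mul_C_mul_X_pow_sub_C {R : Type*} [Ring R] (j k : ℕ) (a : R) :
    (∑ i ∈ range k, X ^ (i * j) * C (a ^ (k - 1 - i))) * (X ^ j - C a) =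
      X ^ (j * k) - C (a ^ k) := by
  simpa only [← pow_mul, mul_comm j, C_pow] using (commute_X_pow (C a) j).geom_sum₂_mul k

variable {R : Type*} [CommRing R]

theorem mul_modByMonic_mul_right {p q : R[X]} (hp : p.Monic) (hq : q.Monic) (f : R[X]) :
    (f * p) %ₘ (q * p) = (f %ₘ q) * p := by
  nontriviality R
  have h_div : (f %ₘ q) * p + q * p * (f /ₘ q) = f * p := by
    linear_combination p * modByMonic_add_div f q
  have h_deg : ((f %ₘ q) * p).degree < (q * p).degree := by
    rw [hp.degree_mul, hp.degree_mul]
    exact WithBot.add_lt_add_right (degree_ne_bot.mpr hp.ne_zero) (degree_modByMonic_lt f hq)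
  exact (div_modByMonic_unique _ _ (hq.mul hp) ⟨h_div, h_deg⟩).2

theorem modByMonic_mul_sub_modByMonic_mul {p q s t r : R[X]} (hp : p.Monic) (hq : q.Monic)
    (h : s * p - t * q = r) (hr : r.degree < (p * q).degree) :
    (s %ₘ q) * p - (t %ₘ p) * q = r := by
  nontriviality R
  calc
    (s %ₘ q) * p - (t %ₘ p) * q = (s * p) %ₘ (q * p) - (t * q) %ₘ (p * q) := by
      rw [mul_modByMonic_mul_right hp hq, mul_modByMonic_mul_right hq hp]
    _ = r %ₘ (p * q) := by rw [mul_comm q p, ← sub_modByMonic, h]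
    _ = r := (modByMonic_eq_self_iff (hp.mul hq)).mpr hr

theorem modByMonic_sum_mul_sub_modByMonic_sum_mul {j k : ℕ} (hj : 0 < j) (hk : 0 < k) (a b : R) :
    ((∑ i ∈ range k, X ^ (i * j) * C (a ^ (k - 1 - i))) %ₘ (X ^ k - C b)) * (X ^ j - C a) -
        ((∑ i ∈ range j, X ^ (i * k) * C (b ^ (j - 1 - i))) %ₘ (X ^ j - C a)) * (X ^ k - C b) =
      C (b ^ j - a ^ k) := by
  nontriviality R
  have hp : (X ^ j - C a).Monic := monic_X_pow_sub_C a hj.ne'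
  have hq : (X ^ k - C b).Monic := monic_X_pow_sub_C b hk.ne'
  refine modByMonic_mul_sub_modByMonic_mul hp hq ?_ ?_
  · rw [sum_X_pow_mul_C_mul_X_pow_sub_C, sum_X_pow_mul_C_mul_X_pow_sub_C, mul_comm k j,
      sub_sub_sub_cancel_left, C_sub]
  · rw [hq.degree_mul, degree_X_pow_sub_C hj, degree_X_pow_sub_C hk]
    exact degree_C_le.trans_lt (by exact_mod_cast Nat.add_pos_left hj k)

end Polynomial

theorem one_div_mul_eq_inv_mul_div_sub_inv_mul_div {F : Type*} [Field F] {p q u v c : F}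
    (hp : p ≠ 0) (hq : q ≠ 0) (hc : c ≠ 0) (h : u * p - v * q = c) :
    1 / (p * q) = c⁻¹ * (u / q) - c⁻¹ * (v / p) := by
  field_simp
  linear_combination -h

theorem elliott_partial_fraction_general {R : Type*} [CommRing R] {L : Type*} [Field L]
    [Algebra R[X] L] [FaithfulSMul R[X] L] (j k : ℕ) (hj : 0 < j) (hk : 0 < k)
    (a b : R) (hab : a ^ k ≠ b ^ j) :
    (1 : L) /
        (algebraMap R[X] L (X ^ j - C a) * algebraMap R[X] L (X ^ k - C b)) =
      (algebraMap R[X] L (C (b ^ j - a ^ k)))⁻¹ *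
          (algebraMap R[X] L
              ((∑ i ∈ range k, X ^ (i * j) * C (a ^ (k - 1 - i))) %ₘ (X ^ k - C b)) /
            algebraMap R[X] L (X ^ k - C b)) -
        (algebraMap R[X] L (C (b ^ j - a ^ k)))⁻¹ *
          (algebraMap R[X] L
              ((∑ i ∈ range j, X ^ (i * k) * C (b ^ (j - 1 - i))) %ₘ (X ^ j - C a)) /
            algebraMap R[X] L (X ^ j - C a)) ∧
      ((∑ i ∈ range k, X ^ (i * j) * C (a ^ (k - 1 - i)) : R[X]) %ₘ (X ^ k - C b)).degree <
        (k : ℕ) ∧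
      ((∑ i ∈ range j, X ^ (i * k) * C (b ^ (j - 1 - i)) : R[X]) %ₘ (X ^ j - C a)).degree <
        (j : ℕ) := by
  have : Nontrivial R := ⟨a ^ k, b ^ j, hab⟩
  have hp : (X ^ j - C a).Monic := monic_X_pow_sub_C a hj.ne'
  have hq : (X ^ k - C b).Monic := monic_X_pow_sub_C b hk.ne'
  have hc : C (b ^ j - a ^ k) ≠ 0 := C_ne_zero.mpr (sub_ne_zero.mpr hab.symm)
  have map_ne_zero {f : R[X]} (hf : f ≠ 0) : algebraMap R[X] L f ≠ 0 :=
    (map_ne_zero_iff _ (FaithfulSMul.algebraMap_injective R[X] L)).mpr hf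
  refine ⟨one_div_mul_eq_inv_mul_div_sub_inv_mul_div (map_ne_zero hp.ne_zero)
    (map_ne_zero hq.ne_zero) (map_ne_zero hc) ?_, ?_, ?_⟩
  · rw [← map_mul, ← map_mul, ← map_sub, modByMonic_sum_mul_sub_modByMonic_sum_mul hj hk]
  · exact degree_X_pow_sub_C hk b ▸ degree_modByMonic_lt _ hq
  · exact degree_X_pow_sub_C hj a ▸ degree_modByMonic_lt _ hp

/-- Partial fraction expansion of `1/((X^j - a)(X^k - b))` in `K(X)` when `a^k ≠ b^j`:
`1/((X^j-a)(X^k-b)) = (1/(b^j-a^k)) · Frac(S₁/(X^k-b)) - (1/(b^j-a^k)) · Frac(S₂/(X^j-a))`,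
where `S₁ = ∑_{i<k} X^{ij} a^{k-1-i}`, `S₂ = ∑_{i<j} X^{ik} b^{j-1-i}`, and the numerators
(the remainders mod the monic denominators) have degree `< k` and `< j` respectively. -/
theorem elliott_partial_fraction {K : Type*} [Field K] (j k : ℕ) (hj : 0 < j) (hk : 0 < k)
    (a b : K) (hab : a ^ k ≠ b ^ j) :
    (1 : RatFunc K) /
        (algebraMap K[X] (RatFunc K) (X ^ j - C a) * algebraMap K[X] (RatFunc K) (X ^ k - C b)) =
      (algebraMap K[X] (RatFunc K) (C (b ^ j - a ^ k)))⁻¹ *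
          (algebraMap K[X] (RatFunc K)
              ((∑ i ∈ range k, X ^ (i * j) * C (a ^ (k - 1 - i))) %ₘ (X ^ k - C b)) /
            algebraMap K[X] (RatFunc K) (X ^ k - C b)) -
        (algebraMap K[X] (RatFunc K) (C (b ^ j - a ^ k)))⁻¹ *
          (algebraMap K[X] (RatFunc K)
              ((∑ i ∈ range j, X ^ (i * k) * C (b ^ (j - 1 - i))) %ₘ (X ^ j - C a)) /
            algebraMap K[X] (RatFunc K) (X ^ j - C a)) ∧
      ((∑ i ∈ range k, X ^ (i * j) * C (a ^ (k - 1 - i)) : K[X]) %ₘ (X ^ k - C b)).degree <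
        (k : ℕ) ∧
      ((∑ i ∈ range j, X ^ (i * k) * C (b ^ (j - 1 - i)) : K[X]) %ₘ (X ^ j - C a)).degree <
        (j : ℕ) :=
  elliott_partial_fraction_general j k hj hk a b hab
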